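/- Let Ω ⊆ ℝ^m be open and let f = (f^{x_1}, f^{y_1}, …, f^{x_n}, f^{y_n}, f^t) : Ω → ℝ^{2n+1} be a map of class C^{0,1/2+}_loc into ℍ^n: for every compact K ⊆ Ω, sup{ d_K(f(p), f(q))/|p−q|^{1/2} : p, q ∈ K, 0 < |p−q| ≤ s } → 0 as s → 0+. If all the components f^{x_j}, f^{y_j} (j = 1, …, n) are differentiable at a point p_0 ∈ Ω, then the last component f^t is also differentiable at p_0 and its derivative satisfies Df^t(p_0) = 2·∑_{j=1}^n ( f^{y_j}(p_0)·Df^{x_j}(p_0) − f^{x_j}(p_0)·Df^{y_j}(p_0) ) as linear maps ℝ^m → ℝ. -/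

import Mathlib

open Metric Set MeasureTheory Topology

/-- The index of the coordinate `x_j` in `ℝ^{2n+1}`. -/
def xI (n : ℕ) (j : Fin n) : Fin (2*n+1) := ⟨2*j.1, by have := j.2; omega⟩

/-- The index of the coordinate `y_j` in `ℝ^{2n+1}`. -/
def yI (n : ℕ) (j : Fin n) : Fin (2*n+1) := ⟨2*j.1+1, by have := j.2; omega⟩

/-- The index of the coordinate `t` in `ℝ^{2n+1}`. -/
def tI (n : ℕ) : Fin (2*n+1) := Fin.last (2*n)

/-- The Korányi metric on the Heisenberg group `ℍ^n = ℝ^{2n+1}`: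
`d_K(p,q) = (|z-z'|^4 + |t - t' + 2 ∑_j (x_j' y_j - x_j y_j')|^2)^{1/4}`. -/
noncomputable def dK (n : ℕ) (p q : EuclideanSpace ℝ (Fin (2*n+1))) : ℝ :=
  ((∑ i : Fin (2*n), (p (Fin.castSucc i) - q (Fin.castSucc i)) ^ 2) ^ 2 +
    (p (tI n) - q (tI n) +
      2 * ∑ j : Fin n, (q (xI n j) * p (yI n j) - p (xI n j) * q (yI n j))) ^ 2) ^ ((1:ℝ)/4)

/-- The square of the Korányi distance bounds its vertical term. -/
lemma abs_vertical_le_dK_sq (n : ℕ) (p q : EuclideanSpace ℝ (Fin (2*n+1))) :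
    |p (tI n) - q (tI n) +
      2 * ∑ j : Fin n, (q (xI n j) * p (yI n j) - p (xI n j) * q (yI n j))| ≤ dK n p q ^ 2 := by
  unfold dK
  set A := (∑ i : Fin (2*n), (p (Fin.castSucc i) - q (Fin.castSucc i)) ^ 2) ^ 2
  set B := p (tI n) - q (tI n) +
      2 * ∑ j : Fin n, (q (xI n j) * p (yI n j) - p (xI n j) * q (yI n j))
  have hA : 0 ≤ A := sq_nonneg _
  have hAB : 0 ≤ A + B ^ 2 := by positivity
  have hroot : ((A + B ^ 2) ^ ((1:ℝ)/4)) ^ 2 = √(A + B ^ 2) := by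
    rw [Real.sqrt_eq_rpow, ← Real.rpow_natCast, ← Real.rpow_mul hAB]
    norm_num
  rw [hroot]
  exact Real.abs_le_sqrt (by linarith)

/-- Proposition 7.7 of the paper. If `f : Ω → ℍ^n` is of class
`C^{0,1/2+}_loc` and the first `2n` components are differentiable at `p₀ ∈ Ω`, then so is
the last component, with
`Df^t(p₀) = 2 ∑_j (f^{y_j}(p₀) Df^{x_j}(p₀) - f^{x_j}(p₀) Df^{y_j}(p₀))`. -/
theorem stmt15 (m n : ℕ) (Ω : Set (EuclideanSpace ℝ (Fin m))) (hΩ : IsOpen Ω)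
    (f : EuclideanSpace ℝ (Fin m) → EuclideanSpace ℝ (Fin (2*n+1)))
    (hf : ∀ K : Set (EuclideanSpace ℝ (Fin m)), K ⊆ Ω → IsCompact K →
      ∀ δ : ℝ, 0 < δ → ∃ s : ℝ, 0 < s ∧ ∀ p ∈ K, ∀ q ∈ K, dist p q ≤ s →
        dK n (f p) (f q) ≤ δ * dist p q ^ ((1:ℝ)/2))
    (p₀ : EuclideanSpace ℝ (Fin m)) (hp₀ : p₀ ∈ Ω)
    (hdiff : ∀ j : Fin n,
      DifferentiableAt ℝ (fun p => f p (xI n j)) p₀ ∧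
      DifferentiableAt ℝ (fun p => f p (yI n j)) p₀) :
    DifferentiableAt ℝ (fun p => f p (tI n)) p₀ ∧
    fderiv ℝ (fun p => f p (tI n)) p₀ =
      (2:ℝ) • ∑ j : Fin n,
        (f p₀ (yI n j) • fderiv ℝ (fun p => f p (xI n j)) p₀ -
         f p₀ (xI n j) • fderiv ℝ (fun p => f p (yI n j)) p₀) := by
  have hvert : HasFDerivAt (fun p => f p (tI n) +
      2 * ∑ j : Fin n, (f p₀ (xI n j) * f p (yI n j) - f p (xI n j) * f p₀ (yI n j)))
      (0 : EuclideanSpace ℝ (Fin m) →L[ℝ] ℝ) p₀ := by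
    rw [hasFDerivAt_iff_isLittleO, Asymptotics.isLittleO_iff]
    intro c hc
    obtain ⟨r, hr, hball⟩ := Metric.nhds_basis_closedBall.mem_iff.1 (hΩ.mem_nhds hp₀)
    obtain ⟨s, hs, hfs⟩ := hf _ hball (isCompact_closedBall p₀ r) (√c) (Real.sqrt_pos.2 hc)
    filter_upwards [closedBall_mem_nhds p₀ hr, closedBall_mem_nhds p₀ hs] with p hpr hps
    have hd := hfs p hpr p₀ (mem_closedBall_self hr.le) hps
    have hnonneg : 0 ≤ dK n (f p) (f p₀) := Real.rpow_nonneg (by positivity) _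
    have hsq : dK n (f p) (f p₀) ^ 2 ≤ c * dist p p₀ := by
      refine (pow_le_pow_left₀ hnonneg hd 2).trans_eq ?_
      rw [← Real.sqrt_eq_rpow, mul_pow, Real.sq_sqrt hc.le, Real.sq_sqrt dist_nonneg]
    have hE := (abs_vertical_le_dK_sq n (f p) (f p₀)).trans hsq
    rw [dist_eq_norm] at hE
    simpa [Real.norm_eq_abs, add_sub_right_comm] using hE
  have hsum : HasFDerivAt (fun p => 2 * ∑ j : Fin n,
      (f p₀ (xI n j) * f p (yI n j) - f p (xI n j) * f p₀ (yI n j)))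
      ((2:ℝ) • ∑ j : Fin n,
        (f p₀ (xI n j) • fderiv ℝ (fun p => f p (yI n j)) p₀ -
         f p₀ (yI n j) • fderiv ℝ (fun p => f p (xI n j)) p₀)) p₀ :=
    (HasFDerivAt.fun_sum fun j _ => ((hdiff j).2.hasFDerivAt.const_mul _).sub
      ((hdiff j).1.hasFDerivAt.mul_const _)).const_mul 2
  have ht : HasFDerivAt (fun p => f p (tI n)) ((2:ℝ) • ∑ j : Fin n,
      (f p₀ (yI n j) • fderiv ℝ (fun p => f p (xI n j)) p₀ -
       f p₀ (xI n j) • fderiv ℝ (fun p => f p (yI n j)) p₀)) p₀ := by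
    have hsub := (hvert.fun_sub hsum).congr_fderiv (zero_sub _)
    simp only [add_sub_cancel_right] at hsub
    refine hsub.congr_fderiv ?_
    rw [← smul_neg, ← Finset.sum_neg_distrib]
    simp only [neg_sub]
  exact ⟨ht.differentiableAt, ht.fderiv⟩
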